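/- Let W : ℝ[x] → M_N(ℝ) be a linear map with moments S_k := W(x^k), and let {V_m} be N×N real matrix polynomials with deg V_m = m, nonsingular leading coefficients, which are left-orthogonal with respect to W, i.e. Σ_j V_{m,j}·S_{j+k} = Ω_m·δ_{k,m} for all 0 ≤ k ≤ m with Ω_m nonsingular (where V_m(x) = Σ_j V_{m,j}x^j). Fix m ≥ 1, let x_{m,1},…,x_{m,s} ∈ ℂ be the distinct zeros of det V_m with multiplicities l_1,…,l_s, and assume that for each k the left and right null spaces of V_m(x_{m,k}) both have dimension l_k. Define the associated polynomial of the first kind B^{(1)}_{m−1}(z) := Σ_{i=0}^{m−1} z^i·Σ_{j=i+1}^{m} V_{m,j}·S_{j−1−i}, and for each k set Γ_{m,k} := (l_k / (det V_m)^{(l_k)}(x_{m,k})) · (Adj V_m)^{(l_k−1)}(x_{m,k}) · B^{(1)}_{m−1}(x_{m,k}). Then for every N×N matrix polynomial V(x) = Σ_j V_j x^j of degree ≤ 2m−1 the quadrature formula holds: Σ_j V_j·S_j = Σ_{k=1}^s V(x_{m,k})·Γ_{m,k}. -/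

import Mathlib

open Polynomial Matrix Finset

noncomputable section

abbrev Mat (N : ℕ) := Matrix (Fin N) (Fin N) ℝ

/-- Iterated derivative of a polynomial. -/
def iterDeriv {R : Type*} [CommSemiring R] (l : ℕ) (q : Polynomial R) : Polynomial R :=
  (fun r => Polynomial.derivative r)^[l] q

/-- Complexification of a matrix of real polynomials. -/
def cxMat {N : ℕ} (V : Matrix (Fin N) (Fin N) (Polynomial ℝ)) :
    Matrix (Fin N) (Fin N) (Polynomial ℂ) :=
  V.map (Polynomial.map (algebraMap ℝ ℂ))

/-- Evaluation of a matrix of complex polynomials at a point. -/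
def evalMat {N : ℕ} (V : Matrix (Fin N) (Fin N) (Polynomial ℂ)) (t : ℂ) :
    Matrix (Fin N) (Fin N) ℂ :=
  V.map (Polynomial.eval t)

/-- The matrix `(Adj V)^{(l)}(a)`. -/
def adjDer {N : ℕ} (V : Matrix (Fin N) (Fin N) (Polynomial ℂ)) (l : ℕ) (a : ℂ) :
    Matrix (Fin N) (Fin N) ℂ :=
  Matrix.of fun i j => Polynomial.eval a (iterDeriv l (V.adjugate i j))

/-- The matrix of `j`-th coefficients of a matrix of polynomials. -/
def coeffMat {N : ℕ} (V : Matrix (Fin N) (Fin N) (Polynomial ℝ)) (j : ℕ) : Mat N :=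
  Matrix.of fun a b => (V a b).coeff j

/-- The associated polynomial of the first kind
`B^{(1)}_{m-1}(z) = ∑_{i=0}^{m-1} z^i ∑_{j=i+1}^m V_{m,j} S_{j-1-i}`, evaluated at `z : ℂ`. -/
def assocB1 {N : ℕ} (W : Polynomial ℝ →ₗ[ℝ] Mat N)
    (Vm : Matrix (Fin N) (Fin N) (Polynomial ℝ)) (m : ℕ) (z : ℂ) :
    Matrix (Fin N) (Fin N) ℂ :=
  ∑ i ∈ Finset.range m, z ^ i •
    ((∑ j ∈ Finset.Icc (i + 1) m, coeffMat Vm j * W (X ^ (j - 1 - i))).map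
      (fun r : ℝ => (r : ℂ)))

/-- Entries of a matrix product inherit a common divisor from the left factor. -/
lemma dvd_mul_apply_of_left {R n : Type*} [CommRing R] [Fintype n] {A B : Matrix n n R} {d : R}
    (h : ∀ i j, d ∣ A i j) (i j : n) : d ∣ (A * B) i j := by
  rw [Matrix.mul_apply]
  exact Finset.dvd_sum fun k _ => (h i k).mul_right _

/-- Entries of a matrix product inherit a common divisor from the right factor. -/
lemma dvd_mul_apply_of_right {R n : Type*} [CommRing R] [Fintype n] {A B : Matrix n n R} {d : R}
    (h : ∀ i j, d ∣ B i j) (i j : n) : d ∣ (A * B) i j := by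
  rw [Matrix.mul_apply]
  exact Finset.dvd_sum fun k _ => (h k j).mul_left _

/-- The kernel of a diagonal matrix has dimension the number of zero diagonal entries; this is
preserved by multiplication with invertible matrices. -/
lemma finrank_ker_eq_card_of_mul_mul_eq_diagonal {K n : Type*} [Field K] [DecidableEq K] [Fintype n]
    [DecidableEq n] {A L R : Matrix n n K} {D : n → K} (hL : IsUnit L.det) (hR : IsUnit R.det)
    (h : L * A * R = diagonal D) :
    Module.finrank K (LinearMap.ker A.mulVecLin) = (univ.filter fun i => D i = 0).card := by
  have hrank : A.rank = Fintype.card {i // D i ≠ 0} := by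
    rw [← rank_diagonal, ← h, rank_mul_eq_left_of_isUnit_det _ _ hR,
      rank_mul_eq_right_of_isUnit_det _ _ hL]
  have hsum := LinearMap.finrank_range_add_finrank_ker A.mulVecLin
  rw [show Module.finrank K (LinearMap.range A.mulVecLin) = A.rank from rfl, hrank,
    Module.finrank_fintype_fun_eq_card, Fintype.card_subtype] at hsum
  have hcard := Finset.card_filter_add_card_filter_not (s := (univ : Finset n)) (fun i => D i = 0)
  rw [Finset.card_univ] at hcard
  simp only [ne_eq] at hsum
  omega

/-- If `P(a)` has an `l`-dimensional kernel, then `(X - a)^(l-1)` divides the adjugate of `P`. -/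
lemma X_sub_C_pow_dvd_adjugate {K n : Type*} [Field K] [Fintype n] [DecidableEq n]
    (P : Matrix n n K[X]) (a : K) (i j : n) :
    (X - C a) ^ (Module.finrank K (LinearMap.ker (P.map (eval a)).mulVecLin) - 1) ∣
      P.adjugate i j := by
  classical
  obtain ⟨L, R, D, h⟩ :=
    Matrix.Pivot.exists_list_transvec_mul_mul_list_transvec_eq_diagonal (P.map (eval a))
  set U := (L.map TransvectionStruct.toMatrix).prod with hU
  set T := (R.map TransvectionStruct.toMatrix).prod with hT
  have hUdet : U.det = 1 := TransvectionStruct.det_toMatrix_prod L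
  have hTdet : T.det = 1 := TransvectionStruct.det_toMatrix_prod R
  rw [finrank_ker_eq_card_of_mul_mul_eq_diagonal (by simp [hUdet]) (by simp [hTdet]) h]
  set Q := U.map C * P * T.map C with hQ
  have hQeval : Q.map (eval a) = diagonal D := by
    rw [← h, hQ]
    have hC : ∀ M : Matrix n n K, (M.map C).map (evalRingHom a) = M := fun M => by ext; simp
    change (U.map C * P * T.map C).map (evalRingHom a) = U * P.map (evalRingHom a) * T
    rw [Matrix.map_mul, Matrix.map_mul, hC, hC]
  set d : n → K[X] := fun k => if D k = 0 then X - C a else 1 with hd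
  have hdvd : ∀ i k, d k ∣ Q i k := by
    intro i k
    by_cases hk : D k = 0
    · have : eval a (Q i k) = diagonal D i k := congrFun (congrFun hQeval i) k
      simp only [hd, hk, if_true]
      rw [dvd_iff_isRoot, IsRoot, this]
      by_cases hik : i = k
      · simp [hik, hk]
      · simp [hik]
    · simp [hd, hk]
  choose M hM using hdvd
  have hfac : Q = Matrix.of M * diagonal d := by
    ext i k : 2
    rw [mul_diagonal, of_apply, hM, mul_comm]
  have hprod : ∀ k, (X - C a) ^ ((univ.filter fun i => D i = 0).card - 1) ∣
      ∏ i ∈ univ.erase k, d i := by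
    intro k
    simp only [hd]
    rw [prod_ite, prod_const, prod_const_one, mul_one]
    refine pow_dvd_pow _ ?_
    rw [filter_erase]
    exact pred_card_le_card_erase
  have hQadj : ∀ i j, (X - C a) ^ ((univ.filter fun i => D i = 0).card - 1) ∣ Q.adjugate i j := by
    rw [hfac, adjugate_mul_distrib]
    refine dvd_mul_apply_of_left fun i j => ?_
    rw [adjugate_diagonal, diagonal_apply]
    split_ifs
    · exact hprod _
    · exact dvd_zero _
  have hcancel : ∀ M : Matrix n n K, M.det = 1 → M.map C * (M.map C).adjugate = 1 := by
    intro M hM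
    have : (M.map C).det = 1 := by
      have := RingHom.map_det (C : K →+* K[X]) M
      rw [hM, map_one] at this
      exact this.symm
    rw [mul_adjugate, this, one_smul]
  have hcancel' : (U.map C).adjugate * U.map C = 1 := mul_eq_one_comm.mp (hcancel U hUdet)
  have hP : P.adjugate = T.map C * Q.adjugate * U.map C := by
    rw [hQ, adjugate_mul_distrib, adjugate_mul_distrib]
    simp only [← Matrix.mul_assoc]
    rw [hcancel T hTdet, Matrix.one_mul, Matrix.mul_assoc, hcancel', Matrix.mul_one]
  rw [hP]
  exact dvd_mul_apply_of_left (dvd_mul_apply_of_right hQadj) i j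

lemma eval_iterDeriv_X_sub_C_pow_mul (n : ℕ) (a : ℂ) (g : ℂ[X]) :
    eval a (iterDeriv n ((X - C a) ^ n * g)) = n.factorial * eval a g := by
  have := aeval_iterate_derivative_self ((X - C a) ^ n * g) n a (p' := g) (by simp)
  simpa [iterDeriv, Polynomial.coe_aeval_eq_eval] using this

section

variable {N : ℕ}

lemma evalMat_mul (P Q : Matrix (Fin N) (Fin N) ℂ[X]) (t : ℂ) :
    evalMat (P * Q) t = evalMat P t * evalMat Q t :=
  Matrix.map_mul (f := evalRingHom t)

lemma evalMat_sub (P Q : Matrix (Fin N) (Fin N) ℂ[X]) (t : ℂ) :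
    evalMat (P - Q) t = evalMat P t - evalMat Q t := by
  ext; simp [evalMat]

lemma evalMat_smul (f : ℂ[X]) (P : Matrix (Fin N) (Fin N) ℂ[X]) (t : ℂ) :
    evalMat (f • P) t = eval t f • evalMat P t := by
  ext; simp [evalMat]

lemma evalMat_sum {ι : Type*} (s : Finset ι) (P : ι → Matrix (Fin N) (Fin N) ℂ[X]) (t : ℂ) :
    evalMat (∑ k ∈ s, P k) t = ∑ k ∈ s, evalMat (P k) t := by
  ext; simp [evalMat, Matrix.sum_apply, eval_finsetSum]

lemma evalMat_map_C (M : Matrix (Fin N) (Fin N) ℂ) (t : ℂ) : evalMat (M.map C) t = M := by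
  ext; simp [evalMat]

/-- The residue of `P⁻¹` at the zero `a` of `det P` of multiplicity `l`, under the assumption that
the pole is simple. -/
def invResidue (P : Matrix (Fin N) (Fin N) ℂ[X]) (l : ℕ) (a : ℂ) : Matrix (Fin N) (Fin N) ℂ :=
  ((l : ℂ) / eval a (iterDeriv l P.det)) • adjDer P (l - 1) a

/-- When the multiplicity of the zero `a` of `det P` equals the dimension of the kernel of `P(a)`,
`P⁻¹` has a simple pole at `a`: the common factors of `det P` and `Adj P` are cancelled. -/
lemma exists_reduced_adjugate {P : Matrix (Fin N) (Fin N) ℂ[X]} {l : ℕ} {a : ℂ} (hl : 1 ≤ l)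
    (hP : P.det ≠ 0) (hmult : P.det.rootMultiplicity a = l)
    (hdim : Module.finrank ℂ (LinearMap.ker (evalMat P a).mulVecLin) = l) :
    ∃ (A : Matrix (Fin N) (Fin N) ℂ[X]) (g : ℂ[X]),
      eval a g ≠ 0 ∧ P.adjugate = (X - C a) ^ (l - 1) • A ∧
      P * A = ((X - C a) * g) • 1 ∧ A * P = ((X - C a) * g) • 1 ∧
      evalMat A a = eval a g • invResidue P l a := by
  obtain ⟨g, hg⟩ : (X - C a) ^ l ∣ P.det := hmult ▸ pow_rootMultiplicity_dvd _ _
  have hga : eval a g ≠ 0 := by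
    intro h0
    obtain ⟨q, hq⟩ := dvd_iff_isRoot.mpr h0
    have : (X - C a) ^ (l + 1) ∣ P.det := ⟨q, by rw [hg, hq]; ring⟩
    have := (le_rootMultiplicity_iff hP).mpr this
    omega
  have hdvd : ∀ i j, (X - C a) ^ (l - 1) ∣ P.adjugate i j := by
    intro i j
    have := X_sub_C_pow_dvd_adjugate P a i j
    rwa [show P.map (eval a) = evalMat P a from rfl, hdim] at this
  choose A hA using hdvd
  have hadj : P.adjugate = (X - C a) ^ (l - 1) • Matrix.of A := by
    ext i j : 2
    simp [hA]
  have hne : (X - C a) ^ (l - 1) ≠ 0 := pow_ne_zero _ (X_sub_C_ne_zero a)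
  have hdet : P.det = (X - C a) ^ (l - 1) * ((X - C a) * g) := by
    rw [hg, ← mul_assoc, ← pow_succ, Nat.sub_add_cancel hl]
  refine ⟨Matrix.of A, g, hga, hadj, ?_, ?_, ?_⟩
  · have := mul_adjugate P
    rw [hadj, hdet, Matrix.mul_smul, mul_smul] at this
    exact smul_right_injective _ hne this
  · have := adjugate_mul P
    rw [hadj, hdet, Matrix.smul_mul, mul_smul] at this
    exact smul_right_injective _ hne this
  · ext i j
    have hfac : (l.factorial : ℂ) = l * (l - 1).factorial := by
      exact_mod_cast (Nat.mul_factorial_pred (by omega)).symm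
    have hlne : (l : ℂ) ≠ 0 := by exact_mod_cast (by omega : l ≠ 0)
    have hfne : ((l - 1).factorial : ℂ) ≠ 0 := by exact_mod_cast Nat.factorial_ne_zero _
    simp only [invResidue, adjDer, evalMat, map_apply, of_apply, Matrix.smul_apply, smul_eq_mul, hA, hg,
      eval_iterDeriv_X_sub_C_pow_mul, hfac]
    field_simp

/-- The matrix polynomial `∑_{j ≤ m} c_j X^j`. -/
def matPoly (c : ℕ → Matrix (Fin N) (Fin N) ℂ) (m : ℕ) : Matrix (Fin N) (Fin N) ℂ[X] :=
  ∑ j ∈ range (m + 1), (X ^ j : ℂ[X]) • (c j).map C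

/-- The associated polynomial `∑_{i < m} X^i ∑_{j = i+1}^m c_j S_{j-1-i}`. -/
def assocPoly (c : ℕ → Matrix (Fin N) (Fin N) ℂ) (m : ℕ) (S : ℕ → Matrix (Fin N) (Fin N) ℂ) :
    Matrix (Fin N) (Fin N) ℂ[X] :=
  ∑ i ∈ range m, (X ^ i : ℂ[X]) • (∑ j ∈ Icc (i + 1) m, c j * S (j - 1 - i)).map C

lemma coeff_sum_X_pow_smul (c : ℕ → Matrix (Fin N) (Fin N) ℂ) (m n : ℕ) (a b : Fin N) :
    ((∑ j ∈ range m, (X ^ j : ℂ[X]) • (c j).map C) a b).coeff n =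
      if n < m then c n a b else 0 := by
  simp [Matrix.sum_apply]

lemma evalMat_matPoly (c : ℕ → Matrix (Fin N) (Fin N) ℂ) (m : ℕ) (z : ℂ) :
    evalMat (matPoly c m) z = ∑ j ∈ range (m + 1), z ^ j • c j := by
  rw [matPoly, evalMat_sum]
  exact sum_congr rfl fun j _ => by rw [evalMat_smul, evalMat_map_C, eval_pow, eval_X]

/-- A left multiple of a matrix polynomial of degree `m` with nonsingular leading coefficient is
zero if its degree is less than `m`. -/
lemma eq_zero_of_eq_matPoly_mul {c : ℕ → Matrix (Fin N) (Fin N) ℂ} {m : ℕ}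
    (hc : IsUnit (c m).det) {Q Y : Matrix (Fin N) (Fin N) ℂ[X]}
    (hQ : ∀ i j n, m ≤ n → (Q i j).coeff n = 0) (h : Q = matPoly c m * Y) : Q = 0 := by
  have hPcoeff : ∀ n, (matPolyEquiv (matPoly c m)).coeff n = if n < m + 1 then c n else 0 := by
    intro n
    ext i j
    rw [matPolyEquiv_coeff_apply, matPoly, coeff_sum_X_pow_smul]
    split_ifs <;> rfl
  have hPdeg : (matPolyEquiv (matPoly c m)).natDegree ≤ m :=
    natDegree_le_iff_coeff_eq_zero.mpr fun n hn => by rw [hPcoeff, if_neg (by omega)]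
  have hmul : (matPolyEquiv Q).coeff (m + (matPolyEquiv Y).natDegree) =
      c m * (matPolyEquiv Y).leadingCoeff := by
    rw [h, map_mul, coeff_mul_add_eq_of_natDegree_le hPdeg le_rfl, hPcoeff, if_pos (by omega)]
    rfl
  have hzero : (matPolyEquiv Q).coeff (m + (matPolyEquiv Y).natDegree) = 0 := by
    ext i j
    rw [matPolyEquiv_coeff_apply, hQ _ _ _ (by omega)]
    rfl
  have hY : (matPolyEquiv Y).leadingCoeff = 0 := by
    rw [hzero] at hmul
    exact ((isUnit_iff_isUnit_det _).mpr hc).mul_right_eq_zero.mp hmul.symm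
  have hY0 : Y = 0 :=
    (map_eq_zero_iff matPolyEquiv matPolyEquiv.injective).mp (leadingCoeff_eq_zero.mp hY)
  rw [h, hY0, Matrix.mul_zero]

lemma assocPoly_sub (c : ℕ → Matrix (Fin N) (Fin N) ℂ) (m : ℕ)
    (S T : ℕ → Matrix (Fin N) (Fin N) ℂ) :
    assocPoly c m (S - T) = assocPoly c m S - assocPoly c m T := by
  simp only [assocPoly, ← sum_sub_distrib, ← smul_sub, Pi.sub_apply, Matrix.mul_sub]
  refine sum_congr rfl fun i _ => ?_
  rw [sum_sub_distrib, Matrix.map_sub _ (map_sub C)]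

lemma assocPoly_sum {ι : Type*} (s : Finset ι) (c : ℕ → Matrix (Fin N) (Fin N) ℂ) (m : ℕ)
    (S : ι → ℕ → Matrix (Fin N) (Fin N) ℂ) :
    assocPoly c m (∑ k ∈ s, S k) = ∑ k ∈ s, assocPoly c m (S k) := by
  classical
  induction s using Finset.induction_on with
  | empty => ext; simp [assocPoly]
  | insert k s hk ih =>
    have := assocPoly_sub c m (S k + ∑ k ∈ s, S k) (S k)
    rw [add_sub_cancel_left, eq_sub_iff_add_eq] at this
    rw [sum_insert hk, sum_insert hk, ← ih, ← this, add_comm]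

lemma X_sub_C_smul_assocPoly_geom (c : ℕ → Matrix (Fin N) (Fin N) ℂ) (m : ℕ) (x : ℂ)
    (G : Matrix (Fin N) (Fin N) ℂ) :
    (X - C x) • assocPoly c m (fun n => x ^ n • G) =
      (matPoly c m - (evalMat (matPoly c m) x).map C) * G.map C := by
  have hswap : assocPoly c m (fun n => x ^ n • G) =
      ∑ j ∈ range (m + 1), (∑ i ∈ range j, (X ^ i * C x ^ (j - 1 - i) : ℂ[X])) •
        ((c j).map C * G.map C) := by
    have h1 : assocPoly c m (fun n => x ^ n • G) =
        ∑ i ∈ range m, ∑ j ∈ Icc (i + 1) m, (X ^ i * C x ^ (j - 1 - i) : ℂ[X]) •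
          ((c j).map C * G.map C) := by
      refine sum_congr rfl fun i _ => ?_
      rw [← RingHom.mapMatrix_apply, map_sum, smul_sum]
      refine sum_congr rfl fun j _ => ?_
      rw [map_mul, mul_smul]
      congr 1
      rw [← Matrix.mul_smul]
      congr 1
      ext a b : 1
      simp
    simp only [h1, sum_smul]
    refine sum_comm' fun i j => ?_
    simp only [mem_range, mem_Icc]
    omega
  have heval : (evalMat (matPoly c m) x).map C =
      ∑ j ∈ range (m + 1), (C x ^ j : ℂ[X]) • (c j).map C := by
    ext a b : 1
    simp [evalMat_matPoly, Matrix.sum_apply]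
  rw [hswap, heval, matPoly, ← sum_sub_distrib, smul_sum, Matrix.sum_mul]
  refine sum_congr rfl fun j _ => ?_
  rw [← sub_smul, smul_smul, Matrix.smul_mul, mul_comm (X - C x), geom_sum₂_mul]

/-- A sequence satisfying a homogeneous recurrence with nonsingular leading coefficient and
vanishing initial data vanishes. -/
lemma eq_zero_of_recurrence {c U : ℕ → Matrix (Fin N) (Fin N) ℂ} {m : ℕ}
    (hc : IsUnit (c m).det)
    (hinit : ∀ i < m, ∑ j ∈ Icc (i + 1) m, c j * U (j - 1 - i) = 0)
    (hrec : ∀ k < m, ∑ j ∈ range (m + 1), c j * U (j + k) = 0) :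
    ∀ n < 2 * m, U n = 0 := by
  have hcancel : ∀ M, c m * M = 0 → M = 0 := fun M h =>
    ((isUnit_iff_isUnit_det _).mpr hc).mul_right_eq_zero.mp h
  intro n
  induction n using Nat.strong_induction_on with
  | _ n ih =>
    intro hn
    apply hcancel
    by_cases hnm : n < m
    · have h := hinit (m - 1 - n) (by omega)
      rw [sum_eq_single_of_mem m (by simp only [mem_Icc]; omega)] at h
      · rwa [show m - 1 - (m - 1 - n) = n by omega] at h
      · intro j hj hjm
        rw [mem_Icc] at hj
        rw [ih _ (by omega) (by omega), Matrix.mul_zero]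
    · have h := hrec (n - m) (by omega)
      rw [sum_eq_single_of_mem m (by simp)] at h
      · rwa [show m + (n - m) = n by omega] at h
      · intro j hj hjm
        rw [mem_range] at hj
        rw [ih _ (by omega) (by omega), Matrix.mul_zero]

/-- If every root of `p` is, with multiplicity, a root of `f`, then `p` divides `f`. -/
lemma dvd_of_forall_rootMultiplicity_dvd {p f : ℂ[X]} (hp : p ≠ 0)
    (h : ∀ a, eval a p = 0 → (X - C a) ^ p.rootMultiplicity a ∣ f) : p ∣ f := by
  classical
  by_cases hf : f = 0
  · exact hf ▸ dvd_zero p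
  · rw [IsAlgClosed.dvd_iff_roots_le_roots hp hf, Multiset.le_iff_count]
    intro a
    rw [count_roots, count_roots]
    by_cases ha : eval a p = 0
    · exact (le_rootMultiplicity_iff hf).mpr (h a ha)
    · rw [rootMultiplicity_eq_zero ha]
      exact Nat.zero_le _

end

/-- The moments of a left-orthogonal matrix polynomial `P = ∑_{j ≤ m} c_j X^j` are recovered, up to
order `2m - 1`, from the zeros of `det P`. -/
theorem moment_eq_sum_invResidue {N : ℕ} {c S : ℕ → Matrix (Fin N) (Fin N) ℂ} {m : ℕ}
    (hc : IsUnit (c m).det)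
    (horth : ∀ k < m, ∑ j ∈ range (m + 1), c j * S (j + k) = 0)
    (hP : (matPoly c m).det ≠ 0)
    {s : ℕ} {x : Fin s → ℂ} (hinj : Function.Injective x) {l : Fin s → ℕ}
    (hzeros : ∀ z : ℂ, (matPoly c m).det.eval z = 0 ↔ ∃ k, z = x k)
    (hmult : ∀ k, (matPoly c m).det.rootMultiplicity (x k) = l k)
    (hdim : ∀ k, Module.finrank ℂ
      (LinearMap.ker (evalMat (matPoly c m) (x k)).mulVecLin) = l k) :
    ∀ n < 2 * m, S n = ∑ k, x k ^ n •
      (invResidue (matPoly c m) (l k) (x k) * evalMat (assocPoly c m S) (x k)) := by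
  have hl : ∀ k, 1 ≤ l k := fun k => by
    rw [← hmult k]
    exact (rootMultiplicity_pos hP).mpr ((hzeros _).mpr ⟨k, rfl⟩)
  choose A g hg hadj hPA hAP hres using fun k => exists_reduced_adjugate (hl k) hP (hmult k) (hdim k)
  set P := matPoly c m with hPdef
  set B := assocPoly c m S with hB
  set G : Fin s → Matrix (Fin N) (Fin N) ℂ :=
    fun k => invResidue P (l k) (x k) * evalMat B (x k) with hG
  set T : ℕ → Matrix (Fin N) (Fin N) ℂ := ∑ k, fun n => x k ^ n • G k with hT
  have hPG : ∀ k, evalMat P (x k) * G k = 0 := by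
    intro k
    have h := congrArg (fun M => evalMat M (x k)) (hPA k)
    simp only [evalMat_mul, hres, evalMat_smul, eval_mul, eval_sub, eval_X, eval_C, sub_self,
      zero_mul, zero_smul, Matrix.mul_smul] at h
    rw [hG, ← Matrix.mul_assoc, (smul_eq_zero_iff_right (hg k)).mp h, Matrix.zero_mul]
  set F : Fin s → Matrix (Fin N) (Fin N) ℂ[X] :=
    fun k => assocPoly c m (fun n => x k ^ n • G k) with hF
  have hFP : ∀ k, (X - C (x k)) • F k = P * (G k).map C := by
    intro k
    rw [hF, X_sub_C_smul_assocPoly_geom, Matrix.sub_mul, ← Matrix.map_mul, ← hPdef, hPG,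
      Matrix.map_zero _ (map_zero C), sub_zero]
  have hAF : ∀ i k, (X - C (x k)) • (A i * F k) = ((X - C (x i)) * g i) • (G k).map C := by
    intro i k
    rw [← Matrix.mul_smul, hFP, ← Matrix.mul_assoc, hAP, Matrix.smul_mul, Matrix.one_mul]
  have hAF_eval : ∀ i k, evalMat (A i * F k) (x i) =
      if k = i then evalMat (A i * B) (x i) else 0 := by
    intro i k
    split_ifs with hik
    · subst hik
      have h := hAF k k
      rw [mul_smul] at h
      rw [smul_right_injective _ (X_sub_C_ne_zero (x k)) h, evalMat_smul, evalMat_map_C, evalMat_mul,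
        hres, Matrix.smul_mul]
    · have h := congrArg (fun M => evalMat M (x i)) (hAF i k)
      simp only [evalMat_smul, eval_mul, eval_sub, eval_X, eval_C, sub_self, zero_mul,
        zero_smul] at h
      exact (smul_eq_zero_iff_right (sub_ne_zero.mpr fun e => hik (hinj e).symm)).mp h
  set Q := assocPoly c m (T - S) with hQ
  have hAQ : ∀ i, evalMat (A i * Q) (x i) = 0 := by
    intro i
    rw [hQ, assocPoly_sub, hT, assocPoly_sum, Matrix.mul_sub, evalMat_sub, Matrix.mul_sum,
      evalMat_sum, sum_congr rfl fun k _ => hAF_eval i k]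
    simp [hB]
  have hdvd : ∀ a b, P.det ∣ (P.adjugate * Q) a b := by
    intro a b
    refine dvd_of_forall_rootMultiplicity_dvd hP fun z hz => ?_
    obtain ⟨i, rfl⟩ := (hzeros z).mp hz
    rw [hmult, hadj i, Matrix.smul_mul, Matrix.smul_apply, smul_eq_mul,
      show (X - C (x i)) ^ l i = (X - C (x i)) ^ (l i - 1) * (X - C (x i)) by
        rw [← pow_succ, Nat.sub_add_cancel (hl i)]]
    exact mul_dvd_mul_left _ (dvd_iff_isRoot.mpr (congrFun (congrFun (hAQ i) a) b))
  choose Y hY using hdvd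
  have hadjQ : P.adjugate * Q = P.det • Matrix.of Y := by
    ext a b : 1
    simp [hY]
  have hQP : Q = P * Matrix.of Y := by
    have h := congrArg (P * ·) hadjQ
    simp only [← Matrix.mul_assoc, mul_adjugate, Matrix.smul_mul, Matrix.one_mul,
      Matrix.mul_smul] at h
    exact smul_right_injective _ hP h
  have hQcoeff : ∀ a b n, (Q a b).coeff n =
      if n < m then (∑ j ∈ Icc (n + 1) m, c j * (T - S) (j - 1 - n)) a b else 0 :=
    fun a b n => coeff_sum_X_pow_smul
      (fun i => ∑ j ∈ Icc (i + 1) m, c j * (T - S) (j - 1 - i)) m n a b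
  have hQ0 : Q = 0 :=
    eq_zero_of_eq_matPoly_mul hc (fun a b n hn => by rw [hQcoeff, if_neg (by omega)]) hQP
  have hinit : ∀ i < m, ∑ j ∈ Icc (i + 1) m, c j * (T - S) (j - 1 - i) = 0 := by
    intro i hi
    ext a b
    have h := hQcoeff a b i
    rw [if_pos hi, hQ0] at h
    simpa using h.symm
  have hTrec : ∀ n, ∑ j ∈ range (m + 1), c j * T (j + n) = 0 := by
    intro n
    simp only [hT, Finset.sum_apply, Matrix.mul_sum]
    rw [sum_comm]
    refine sum_eq_zero fun k _ => ?_
    have h := congrArg (fun M => x k ^ n • M) (hPG k)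
    simp only [hPdef, evalMat_matPoly, Matrix.sum_mul, smul_sum, smul_zero] at h
    rw [← h]
    refine sum_congr rfl fun j _ => ?_
    rw [Matrix.mul_smul, Matrix.smul_mul, smul_smul, pow_add, mul_comm]
  have hrec : ∀ k < m, ∑ j ∈ range (m + 1), c j * (T - S) (j + k) = 0 := by
    intro k hk
    simp only [Pi.sub_apply, Matrix.mul_sub, sum_sub_distrib, hTrec, horth k hk, sub_zero]
  intro n hn
  have h := eq_zero_of_recurrence hc hinit hrec n hn
  rw [Pi.sub_apply, sub_eq_zero] at h
  rw [← h, hT, Finset.sum_apply]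

/-- The complexification of the coefficients of a real matrix polynomial. -/
def cxCoeff {N : ℕ} (V : Matrix (Fin N) (Fin N) ℝ[X]) (j : ℕ) : Matrix (Fin N) (Fin N) ℂ :=
  (coeffMat V j).map (fun r : ℝ => (r : ℂ))

lemma map_ofReal_sum_mul {N : ℕ} {ι : Type*} (s : Finset ι) (A B : ι → Mat N) :
    (∑ j ∈ s, A j * B j).map (fun r : ℝ => (r : ℂ)) =
      ∑ j ∈ s, (A j).map (fun r : ℝ => (r : ℂ)) * (B j).map (fun r : ℝ => (r : ℂ)) := by
  have h := map_sum Complex.ofRealHom.mapMatrix (fun j => A j * B j) s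
  simp only [map_mul] at h
  exact h

lemma cxMat_eq_matPoly {N : ℕ} {V : Matrix (Fin N) (Fin N) ℝ[X]} {m : ℕ}
    (hV : ∀ i j, (V i j).natDegree ≤ m) : cxMat V = matPoly (cxCoeff V) m := by
  ext a b n : 2
  rw [matPoly, coeff_sum_X_pow_smul]
  simp only [cxMat, cxCoeff, coeffMat, map_apply, of_apply, coeff_map, Complex.coe_algebraMap]
  split_ifs with h
  · rfl
  · rw [coeff_eq_zero_of_natDegree_lt ((hV a b).trans_lt (by omega)), Complex.ofReal_zero]

lemma evalMat_cxMat {N : ℕ} {V : Matrix (Fin N) (Fin N) ℝ[X]} {m : ℕ}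
    (hV : ∀ i j, (V i j).natDegree ≤ m) (z : ℂ) :
    evalMat (cxMat V) z = ∑ j ∈ range (m + 1), z ^ j • cxCoeff V j := by
  rw [cxMat_eq_matPoly hV, evalMat_matPoly]

lemma assocB1_eq_evalMat {N : ℕ} (W : ℝ[X] →ₗ[ℝ] Mat N) (V : Matrix (Fin N) (Fin N) ℝ[X])
    (m : ℕ) (z : ℂ) :
    assocB1 W V m z = evalMat
      (assocPoly (cxCoeff V) m fun n => (W (X ^ n)).map (fun r : ℝ => (r : ℂ))) z := by
  rw [assocB1, assocPoly, evalMat_sum]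
  refine sum_congr rfl fun i _ => ?_
  rw [evalMat_smul, evalMat_map_C, eval_pow, eval_X, map_ofReal_sum_mul]
  rfl

theorem statement18
    (N : ℕ) (hN : 0 < N)
    (W : Polynomial ℝ →ₗ[ℝ] Mat N)
    (Vs : ℕ → Matrix (Fin N) (Fin N) (Polynomial ℝ))
    (hdeg : ∀ n i j, ((Vs n) i j).natDegree ≤ n)
    (hlead : ∀ n, IsUnit (coeffMat (Vs n) n).det)
    -- left-orthogonality of {V_n} with respect to W
    (Ω : ℕ → Mat N) (hΩ : ∀ n, IsUnit (Ω n).det)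
    (horth : ∀ n k, k ≤ n →
      (∑ j ∈ Finset.range (n + 1), coeffMat (Vs n) j * W (X ^ (j + k)))
        = if k = n then Ω n else 0)
    (m : ℕ) (hm : 1 ≤ m)
    -- the distinct zeros of det V_m, with multiplicities l k
    (s : ℕ) (x : Fin s → ℂ) (hinj : Function.Injective x) (l : Fin s → ℕ)
    (hzeros : ∀ z : ℂ, ((cxMat (Vs m)).det).eval z = 0 ↔ ∃ k, z = x k)
    (hmult : ∀ k, ((cxMat (Vs m)).det).rootMultiplicity (x k) = l k)
    (hdimL : ∀ k, Module.finrank ℂ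
      (LinearMap.ker (evalMat (cxMat (Vs m)) (x k)).vecMulLinear) = l k)
    (hdimR : ∀ k, Module.finrank ℂ
      (LinearMap.ker (evalMat (cxMat (Vs m)) (x k)).mulVecLin) = l k) :
    -- quadrature formula: ∫ V(x) dW(x) = ∑_k V(x_{m,k}) Γ_{m,k}
    ∀ V : Matrix (Fin N) (Fin N) (Polynomial ℝ), (∀ i j, (V i j).natDegree ≤ 2 * m - 1) →
      ((∑ j ∈ Finset.range (2 * m), coeffMat V j * W (X ^ j)).map (fun r : ℝ => (r : ℂ)))
        = ∑ k : Fin s, evalMat (cxMat V) (x k) *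
            (((l k : ℂ) / Polynomial.eval (x k) (iterDeriv (l k) (cxMat (Vs m)).det)) •
              (adjDer (cxMat (Vs m)) (l k - 1) (x k) * assocB1 W (Vs m) m (x k))) := by
  have hP := cxMat_eq_matPoly (hdeg m)
  have hdet : (cxMat (Vs m)).det ≠ 0 := by
    intro h0
    have : Set.range x = Set.univ := Set.eq_univ_of_forall fun z => by
      obtain ⟨k, hk⟩ := (hzeros z).mp (by rw [h0, eval_zero])
      exact ⟨k, hk.symm⟩
    exact Set.infinite_univ (this ▸ Set.finite_range x)
  have hc : IsUnit (cxCoeff (Vs m) m).det := by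
    have h := (hlead m).map Complex.ofRealHom
    rwa [RingHom.map_det] at h
  have horth' : ∀ k < m, ∑ j ∈ range (m + 1),
      cxCoeff (Vs m) j * (W (X ^ (j + k))).map (fun r : ℝ => (r : ℂ)) = 0 := by
    intro k hk
    have h := horth m k hk.le
    rw [if_neg hk.ne] at h
    have h' := map_ofReal_sum_mul (range (m + 1)) (coeffMat (Vs m)) fun j => W (X ^ (j + k))
    rw [h, Matrix.map_zero _ Complex.ofReal_zero] at h'
    exact h'.symm
  rw [hP] at hdet
  simp only [hP] at hzeros hmult
  have hS := moment_eq_sum_invResidue (S := fun n => (W (X ^ n)).map (fun r : ℝ => (r : ℂ)))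
    hc horth' hdet hinj hzeros hmult (hP ▸ hdimR)
  intro V hV
  rw [map_ofReal_sum_mul, sum_congr rfl fun j hj => by rw [hS j (mem_range.mp hj)]]
  simp only [Matrix.mul_sum]
  rw [sum_comm]
  refine sum_congr rfl fun k _ => ?_
  rw [evalMat_cxMat hV, Nat.sub_add_cancel (by omega), Matrix.sum_mul, hP, assocB1_eq_evalMat,
    ← Matrix.smul_mul]
  refine sum_congr rfl fun j _ => ?_
  rw [Matrix.mul_smul, Matrix.smul_mul]
  rfl
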